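/- arXiv:1211.6499 — 7 statements merged into one kernel-verified Lean document; each statement's English description precedes it below -/
import Mathlib

section
/- Parabolic identity for J = Me^u − e^v (proof of Lemma 2.2): Let (u,v) be a radial classical solution as in the context and let M > 0. Define J(r,t) = M e^{u(r,t)} − e^{v(r,t)}, b(r,t) = −[2e^v v_r/(M e^u) + J_r/(M e^u)], and c(r,t) = (e^v/(M e^u)) v_r². Then for all 0 < r < R and 0 < t < T: J_t − J_rr − ((n−1)/r) J_r − b J_r − c J = (λ₁ M − λ₂) e^{u+v}. In particular, if M ≥ λ₂/λ₁ then J_t − J_rr − ((n−1)/r) J_r − b J_r − c J ≥ 0. -/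
/-!
Let `L w = w_t - w_rr - k w_r`. This operator is linear and satisfies
`L (e^w) = e^w (L w - w_r²)`, so `L J = M e^u L u - e^v L v - (M e^u u_r² - e^v v_r²)`. With
`A = M e^u` and `B = e^v`, the coefficient `b` is `-(A u_r + B v_r) / A`, hence
`b J_r = -A u_r² + B² v_r² / A`, while `c J = B v_r² - B² v_r² / A`: the terms `b J_r` and `c J`
absorb the quadratic gradient terms of `L J`, whatever `u` and `v` are. The equations enter only in
the last step, through the values of `L u` and `L v`.
-/

open Set Real Filter Topology

/-- One-sided spatial derivative on the interval `[0,R]` (agrees with the usual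
derivative at interior points). -/
noncomputable def dr (R : ℝ) (f : ℝ → ℝ) (r : ℝ) : ℝ :=
  derivWithin f (Set.Icc 0 R) r

/-- A radial classical solution of problem (1.1), written in radial coordinates:
`u, v : [0,R] × (0,T) → ℝ`, of class C² in `r` and C¹ in `t`, satisfying
`u_t = u_rr + ((n−1)/r) u_r + λ₁ e^v`, `v_t = v_rr + ((n−1)/r) v_r + λ₂ e^u` for
`0 < r < R`, `0 < t < T`, with boundary conditions `u_r(R,t) = e^{v(R,t)}`,
`v_r(R,t) = e^{u(R,t)}`. -/
structure IsRadialSolution (n : ℕ) (R T lam1 lam2 : ℝ) (u v : ℝ → ℝ → ℝ) : Prop where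
  reg_r_u : ∀ t ∈ Ioo (0 : ℝ) T, ContDiffOn ℝ 2 (fun r => u r t) (Icc (0 : ℝ) R)
  reg_r_v : ∀ t ∈ Ioo (0 : ℝ) T, ContDiffOn ℝ 2 (fun r => v r t) (Icc (0 : ℝ) R)
  reg_t_u : ∀ r ∈ Icc (0 : ℝ) R, ∀ t ∈ Ioo (0 : ℝ) T, DifferentiableAt ℝ (u r) t
  reg_t_v : ∀ r ∈ Icc (0 : ℝ) R, ∀ t ∈ Ioo (0 : ℝ) T, DifferentiableAt ℝ (v r) t
  pde_u : ∀ r ∈ Ioo (0 : ℝ) R, ∀ t ∈ Ioo (0 : ℝ) T,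
    deriv (u r) t = dr R (dr R (fun s => u s t)) r
      + ((n - 1 : ℝ) / r) * dr R (fun s => u s t) r + lam1 * Real.exp (v r t)
  pde_v : ∀ r ∈ Ioo (0 : ℝ) R, ∀ t ∈ Ioo (0 : ℝ) T,
    deriv (v r) t = dr R (dr R (fun s => v s t)) r
      + ((n - 1 : ℝ) / r) * dr R (fun s => v s t) r + lam2 * Real.exp (u r t)
  bc_u : ∀ t ∈ Ioo (0 : ℝ) T, dr R (fun s => u s t) R = Real.exp (v R t)
  bc_v : ∀ t ∈ Ioo (0 : ℝ) T, dr R (fun s => v s t) R = Real.exp (u R t)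

/-- The function `J(r,t) = M e^{u(r,t)} − e^{v(r,t)}` from the proof of Lemma 2.2. -/
noncomputable def Jfun (u v : ℝ → ℝ → ℝ) (M : ℝ) (r t : ℝ) : ℝ :=
  M * Real.exp (u r t) - Real.exp (v r t)

/-- The first-order coefficient `b = −[2 e^v v_r/(M e^u) + J_r/(M e^u)]`. -/
noncomputable def bfun (u v : ℝ → ℝ → ℝ) (M R : ℝ) (r t : ℝ) : ℝ :=
  -(2 * Real.exp (v r t) * dr R (fun s => v s t) r / (M * Real.exp (u r t))
      + dr R (fun s => Jfun u v M s t) r / (M * Real.exp (u r t)))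

/-- The zeroth-order coefficient `c = (e^v/(M e^u)) v_r²`. -/
noncomputable def cfun (u v : ℝ → ℝ → ℝ) (M R : ℝ) (r t : ℝ) : ℝ :=
  Real.exp (v r t) / (M * Real.exp (u r t)) * (dr R (fun s => v s t) r) ^ 2

lemma iteratedDerivWithin_two {𝕜 F : Type*} [NontriviallyNormedField 𝕜] [NormedAddCommGroup F]
    [NormedSpace 𝕜 F] (f : 𝕜 → F) (s : Set 𝕜) (x : 𝕜) :
    iteratedDerivWithin 2 f s x = derivWithin (derivWithin f s) s x :=
  iteratedDerivWithin_eq_iterate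

lemma iteratedDerivWithin_two_exp {s : Set ℝ} {f : ℝ → ℝ} {x : ℝ} (hs : UniqueDiffOn ℝ s)
    (hf : ContDiffOn ℝ 2 f s) (hx : x ∈ s) :
    iteratedDerivWithin 2 (fun y => exp (f y)) s x =
      exp (f x) * (iteratedDerivWithin 2 f s x + derivWithin f s x ^ 2) := by
  have hf_diff : DifferentiableOn ℝ f s := hf.differentiableOn two_ne_zero
  have hf'_diff : DifferentiableOn ℝ (derivWithin f s) s :=
    (hf.derivWithin hs one_add_one_eq_two.le).differentiableOn one_ne_zero
  have hexp' : EqOn (derivWithin (fun y => exp (f y)) s)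
      (fun y => exp (f y) * derivWithin f s y) s :=
    fun y hy => derivWithin_exp (hf_diff y hy) (hs y hy)
  rw [iteratedDerivWithin_two, iteratedDerivWithin_two, derivWithin_congr hexp' (hexp' hx),
    derivWithin_fun_mul (hf_diff x hx).exp (hf'_diff x hx),
    derivWithin_exp (hf_diff x hx) (hs x hx)]
  ring

/-- The heat operator with drift, `L w = w_t - w_rr - k w_r`, on `[0,R]`. The radial heat operator
in dimension `n` at radius `r` is the case `k = (n - 1) / r`; as `L` is only evaluated pointwise,
`k` is a number rather than a function of `r`. -/
noncomputable def heatOperator (R k : ℝ) (w : ℝ → ℝ → ℝ) (r t : ℝ) : ℝ :=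
  deriv (w r) t - dr R (dr R (fun s => w s t)) r - k * dr R (fun s => w s t) r

lemma heatOperator_eq (R k : ℝ) (w : ℝ → ℝ → ℝ) (r t : ℝ) :
    heatOperator R k w r t = deriv (w r) t - iteratedDerivWithin 2 (fun s => w s t) (Icc 0 R) r
      - k * derivWithin (fun s => w s t) (Icc 0 R) r := by
  rw [iteratedDerivWithin_two]
  rfl

section HeatOperator

variable {R r t : ℝ} {u v : ℝ → ℝ → ℝ}

lemma heatOperator_const_mul (k M : ℝ) :
    heatOperator R k (fun s τ => M * u s τ) r t = M * heatOperator R k u r t := by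
  simp only [heatOperator_eq, deriv_const_mul_field, derivWithin_const_mul_field,
    iteratedDerivWithin_const_mul_field]
  ring

lemma heatOperator_sub (k : ℝ) (hR : 0 < R) (hr : r ∈ Icc 0 R)
    (hu : ContDiffOn ℝ 2 (fun s => u s t) (Icc 0 R)) (hut : DifferentiableAt ℝ (u r) t)
    (hv : ContDiffOn ℝ 2 (fun s => v s t) (Icc 0 R)) (hvt : DifferentiableAt ℝ (v r) t) :
    heatOperator R k (fun s τ => u s τ - v s τ) r t =
      heatOperator R k u r t - heatOperator R k v r t := by
  have hI : UniqueDiffOn ℝ (Icc 0 R) := uniqueDiffOn_Icc hR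
  have hsub_rr : iteratedDerivWithin 2 (fun s => u s t - v s t) (Icc 0 R) r =
      iteratedDerivWithin 2 (fun s => u s t) (Icc 0 R) r
        - iteratedDerivWithin 2 (fun s => v s t) (Icc 0 R) r :=
    iteratedDerivWithin_sub hr hI (hu r hr) (hv r hr)
  simp only [heatOperator_eq]
  rw [deriv_fun_sub hut hvt, hsub_rr,
    derivWithin_fun_sub (hu.differentiableOn two_ne_zero r hr)
      (hv.differentiableOn two_ne_zero r hr)]
  ring

lemma heatOperator_exp (k : ℝ) (hR : 0 < R) (hr : r ∈ Icc 0 R)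
    (hu : ContDiffOn ℝ 2 (fun s => u s t) (Icc 0 R)) (hut : DifferentiableAt ℝ (u r) t) :
    heatOperator R k (fun s τ => exp (u s τ)) r t =
      exp (u r t) * (heatOperator R k u r t - dr R (fun s => u s t) r ^ 2) := by
  have hI : UniqueDiffOn ℝ (Icc 0 R) := uniqueDiffOn_Icc hR
  simp only [heatOperator_eq, dr]
  rw [deriv_exp hut, derivWithin_exp (hu.differentiableOn two_ne_zero r hr) (hI r hr),
    iteratedDerivWithin_two_exp hI hu hr]
  ring

lemma heatOperator_Jfun (k M : ℝ) (hR : 0 < R) (hr : r ∈ Icc 0 R)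
    (hu : ContDiffOn ℝ 2 (fun s => u s t) (Icc 0 R)) (hut : DifferentiableAt ℝ (u r) t)
    (hv : ContDiffOn ℝ 2 (fun s => v s t) (Icc 0 R)) (hvt : DifferentiableAt ℝ (v r) t) :
    heatOperator R k (Jfun u v M) r t =
      M * (exp (u r t) * (heatOperator R k u r t - dr R (fun s => u s t) r ^ 2))
        - exp (v r t) * (heatOperator R k v r t - dr R (fun s => v s t) r ^ 2) := by
  rw [← heatOperator_exp k hR hr hu hut, ← heatOperator_exp k hR hr hv hvt,
    ← heatOperator_const_mul]
  exact heatOperator_sub k hR hr (contDiffOn_const.mul hu.exp) (hut.exp.const_mul M)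
    hv.exp hvt.exp

lemma dr_Jfun (M : ℝ) (hR : 0 < R) (hr : r ∈ Icc 0 R)
    (hu : DifferentiableWithinAt ℝ (fun s => u s t) (Icc 0 R) r)
    (hv : DifferentiableWithinAt ℝ (fun s => v s t) (Icc 0 R) r) :
    dr R (fun s => Jfun u v M s t) r =
      M * (exp (u r t) * dr R (fun s => u s t) r) - exp (v r t) * dr R (fun s => v s t) r :=
  ((hu.hasDerivWithinAt.exp.const_mul M).sub hv.hasDerivWithinAt.exp).derivWithin
    (uniqueDiffOn_Icc hR r hr)

lemma bfun_mul_dr_Jfun_add_cfun_mul_Jfun {M : ℝ} (hM : M ≠ 0) (hR : 0 < R) (hr : r ∈ Icc 0 R)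
    (hu : DifferentiableWithinAt ℝ (fun s => u s t) (Icc 0 R) r)
    (hv : DifferentiableWithinAt ℝ (fun s => v s t) (Icc 0 R) r) :
    bfun u v M R r t * dr R (fun s => Jfun u v M s t) r + cfun u v M R r t * Jfun u v M r t =
      exp (v r t) * dr R (fun s => v s t) r ^ 2
        - M * (exp (u r t) * dr R (fun s => u s t) r ^ 2) := by
  have hexp : exp (u r t) ≠ 0 := exp_ne_zero _
  rw [bfun, cfun, dr_Jfun M hR hr hu hv, Jfun]
  field_simp
  ring

theorem heatOperator_Jfun_sub_bfun_sub_cfun (k : ℝ) {M : ℝ} (hM : M ≠ 0) (hR : 0 < R)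
    (hr : r ∈ Icc 0 R)
    (hu : ContDiffOn ℝ 2 (fun s => u s t) (Icc 0 R)) (hut : DifferentiableAt ℝ (u r) t)
    (hv : ContDiffOn ℝ 2 (fun s => v s t) (Icc 0 R)) (hvt : DifferentiableAt ℝ (v r) t) :
    heatOperator R k (Jfun u v M) r t - bfun u v M R r t * dr R (fun s => Jfun u v M s t) r
        - cfun u v M R r t * Jfun u v M r t =
      M * exp (u r t) * heatOperator R k u r t - exp (v r t) * heatOperator R k v r t := by
  rw [sub_sub, heatOperator_Jfun k M hR hr hu hut hv hvt,
    bfun_mul_dr_Jfun_add_cfun_mul_Jfun hM hR hr (hu.differentiableOn two_ne_zero r hr)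
      (hv.differentiableOn two_ne_zero r hr)]
  ring

theorem parabolic_identity_J_general {k lam1 lam2 M : ℝ} (hM : M ≠ 0) (hR : 0 < R)
    (hr : r ∈ Icc 0 R)
    (hu : ContDiffOn ℝ 2 (fun s => u s t) (Icc 0 R)) (hut : DifferentiableAt ℝ (u r) t)
    (hv : ContDiffOn ℝ 2 (fun s => v s t) (Icc 0 R)) (hvt : DifferentiableAt ℝ (v r) t)
    (pde_u : heatOperator R k u r t = lam1 * exp (v r t))
    (pde_v : heatOperator R k v r t = lam2 * exp (u r t)) :
    (heatOperator R k (Jfun u v M) r t - bfun u v M R r t * dr R (fun s => Jfun u v M s t) r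
        - cfun u v M R r t * Jfun u v M r t = (lam1 * M - lam2) * exp (u r t + v r t)) ∧
      (lam2 ≤ lam1 * M →
        0 ≤ heatOperator R k (Jfun u v M) r t
          - bfun u v M R r t * dr R (fun s => Jfun u v M s t) r
          - cfun u v M R r t * Jfun u v M r t) := by
  have identity : heatOperator R k (Jfun u v M) r t
      - bfun u v M R r t * dr R (fun s => Jfun u v M s t) r
      - cfun u v M R r t * Jfun u v M r t = (lam1 * M - lam2) * exp (u r t + v r t) := by
    rw [heatOperator_Jfun_sub_bfun_sub_cfun k hM hR hr hu hut hv hvt, pde_u, pde_v, exp_add]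
    ring
  exact ⟨identity, fun h => identity ▸ mul_nonneg (sub_nonneg.2 h) (exp_pos _).le⟩

end HeatOperator

namespace IsRadialSolution

variable {n : ℕ} {R T lam1 lam2 r t : ℝ} {u v : ℝ → ℝ → ℝ}

lemma heatOperator_u (hsol : IsRadialSolution n R T lam1 lam2 u v) (hr : r ∈ Ioo 0 R)
    (ht : t ∈ Ioo 0 T) : heatOperator R ((n - 1) / r) u r t = lam1 * exp (v r t) := by
  rw [heatOperator, hsol.pde_u r hr t ht]
  ring

lemma heatOperator_v (hsol : IsRadialSolution n R T lam1 lam2 u v) (hr : r ∈ Ioo 0 R)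
    (ht : t ∈ Ioo 0 T) : heatOperator R ((n - 1) / r) v r t = lam2 * exp (u r t) := by
  rw [heatOperator, hsol.pde_v r hr t ht]
  ring

end IsRadialSolution

/-- Parabolic identity for `J = M e^u − e^v` (proof of Lemma 2.2): for a radial classical
solution and any `M > 0`,
`J_t − J_rr − ((n−1)/r) J_r − b J_r − c J = (λ₁ M − λ₂) e^{u+v}` for `0 < r < R`,
`0 < t < T`; in particular, if `M ≥ λ₂/λ₁` the left-hand side is nonnegative. -/
theorem parabolic_identity_J {n : ℕ} (hn : 1 ≤ n) {R T lam1 lam2 : ℝ}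
    (hR : 0 < R) (hT : 0 < T) (hlam1 : 0 < lam1) (hlam2 : 0 < lam2)
    {u v : ℝ → ℝ → ℝ} (hsol : IsRadialSolution n R T lam1 lam2 u v)
    {M : ℝ} (hM : 0 < M) :
    ∀ r ∈ Ioo (0 : ℝ) R, ∀ t ∈ Ioo (0 : ℝ) T,
      (deriv (fun τ => Jfun u v M r τ) t
        - dr R (dr R (fun s => Jfun u v M s t)) r
        - ((n - 1 : ℝ) / r) * dr R (fun s => Jfun u v M s t) r
        - bfun u v M R r t * dr R (fun s => Jfun u v M s t) r
        - cfun u v M R r t * Jfun u v M r t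
        = (lam1 * M - lam2) * Real.exp (u r t + v r t)) ∧
      (lam2 / lam1 ≤ M →
        0 ≤ deriv (fun τ => Jfun u v M r τ) t
          - dr R (dr R (fun s => Jfun u v M s t)) r
          - ((n - 1 : ℝ) / r) * dr R (fun s => Jfun u v M s t) r
          - bfun u v M R r t * dr R (fun s => Jfun u v M s t) r
          - cfun u v M R r t * Jfun u v M r t) := by
  intro r hr t ht
  have hr' : r ∈ Icc 0 R := Ioo_subset_Icc_self hr
  have h := parabolic_identity_J_general hM.ne' hR hr' (hsol.reg_r_u t ht)
    (hsol.reg_t_u r hr' t ht) (hsol.reg_r_v t ht) (hsol.reg_t_v r hr' t ht)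
    (hsol.heatOperator_u hr ht) (hsol.heatOperator_v hr ht)
  exact ⟨h.1, fun hle => h.2 ((div_le_iff₀' hlam1).1 hle)⟩
end

section
/- Coupled identity for J₁, J₂ (proof of Theorem 3.1): Let λ₁ = λ₂ = λ > 0 and let (u,v) be a radial classical solution as in the context. Define J₁(r,t) = u_r(r,t) − (r/R)e^{v(r,t)} and J₂(r,t) = v_r(r,t) − (r/R)e^{u(r,t)}. Then for all 0 < r < R and 0 < t < T: J₁ₜ − J₁ᵣᵣ − ((n−1)/r)J₁ᵣ + ((n−1)/r²)J₁ − λ e^{v} J₂ = (r/R) e^{v} v_r² + (2/R) e^{v} v_r. In particular, if v_r ≥ 0 then the left-hand side is nonnegative. -/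
/-!
Let `L = ∂ₜ - ∂ᵣᵣ - ((n-1)/r) ∂ᵣ` be the heat operator on radial functions and
`M = L + (n-1)/r²` the heat operator on radial vector fields `w(r) x/|x|`. Three product-rule
computations hold for smooth `w`:
`M (∂ᵣ w) = ∂ᵣ (L w)`, `M (r w) = r L w - 2 ∂ᵣ w` and `L (f(w)) = f'(w) L w - f''(w) (∂ᵣ w)²`.
If `L u = λ f(v)` and `L v = λ g(u)`, applying them to `J = uᵣ - (r/R) f(v)` gives
`M J = λ f'(v) (vᵣ - (r/R) g(u)) + (r/R) f''(v) vᵣ² + (2/R) f'(v) vᵣ`.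
The exponential system is the case `f = g = exp`.
-/

open Set Real Filter Topology

/-- `J₁(r,t) = u_r(r,t) − (r/R) e^{v(r,t)}` from the proof of Theorem 3.1. -/
noncomputable def J1fun (u v : ℝ → ℝ → ℝ) (R : ℝ) (r t : ℝ) : ℝ :=
  dr R (fun s => u s t) r - (r / R) * Real.exp (v r t)

/-- `J₂(r,t) = v_r(r,t) − (r/R) e^{u(r,t)}` from the proof of Theorem 3.1. -/
noncomputable def J2fun (u v : ℝ → ℝ → ℝ) (R : ℝ) (r t : ℝ) : ℝ :=
  dr R (fun s => v s t) r - (r / R) * Real.exp (u r t)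

section MixedPartials

variable {𝕜 E G : Type*} [NontriviallyNormedField 𝕜] [NormedAddCommGroup E] [NormedSpace 𝕜 E]
  [NormedAddCommGroup G] [NormedSpace 𝕜 G]

theorem hasDerivAt_fderiv_apply_comp {F : E → G} {γ : 𝕜 → E} {γ' : E} {a : 𝕜}
    (hF : ContDiffAt 𝕜 2 F (γ a)) (hγ : HasDerivAt γ γ' a) (e : E) :
    HasDerivAt (fun x => fderiv 𝕜 F (γ x) e) (fderiv 𝕜 (fderiv 𝕜 F) (γ a) γ' e) a := by
  have hF' : DifferentiableAt 𝕜 (fderiv 𝕜 F) (γ a) :=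
    (hF.fderiv_right (m := 1) (by norm_num)).differentiableAt one_ne_zero
  simpa using (hF'.hasFDerivAt.comp_hasDerivAt a hγ).clm_apply (hasDerivAt_const a e)

theorem deriv_comp_eventuallyEq_fderiv_apply {F : E → G} {γ : 𝕜 → 𝕜 → E} {γ' : E} {a b : 𝕜}
    (hF : ContDiffAt 𝕜 2 F (γ a b)) (hγ : ContinuousAt (fun x => γ x b) a)
    (hγ' : ∀ x, HasDerivAt (γ x) γ' b) :
    (fun x => deriv (fun y => F (γ x y)) b) =ᶠ[𝓝 a] fun x => fderiv 𝕜 F (γ x b) γ' := by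
  filter_upwards [hγ.eventually (hF.eventually (by simp))] with x hx
  exact ((hx.differentiableAt two_ne_zero).hasFDerivAt.comp_hasDerivAt b (hγ' x)).deriv

variable {w : 𝕜 → 𝕜 → G} {a b : 𝕜}

theorem hasDerivAt_deriv_right (hw : ContDiffAt 𝕜 2 (fun p : 𝕜 × 𝕜 => w p.1 p.2) (a, b)) :
    HasDerivAt (fun x => deriv (w x) b)
      (fderiv 𝕜 (fderiv 𝕜 fun p : 𝕜 × 𝕜 => w p.1 p.2) (a, b) (1, 0) (0, 1)) a :=
  (hasDerivAt_fderiv_apply_comp (γ := fun x => (x, b)) hw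
    ((hasDerivAt_id a).prodMk (hasDerivAt_const a b)) _).congr_of_eventuallyEq
    (deriv_comp_eventuallyEq_fderiv_apply (γ := Prod.mk) hw (by fun_prop)
      fun x => (hasDerivAt_const b x).prodMk (hasDerivAt_id b))

theorem hasDerivAt_deriv_left (hw : ContDiffAt 𝕜 2 (fun p : 𝕜 × 𝕜 => w p.1 p.2) (a, b)) :
    HasDerivAt (fun y => deriv (fun x => w x y) a)
      (fderiv 𝕜 (fderiv 𝕜 fun p : 𝕜 × 𝕜 => w p.1 p.2) (a, b) (0, 1) (1, 0)) b :=
  (hasDerivAt_fderiv_apply_comp (γ := fun y => (a, y)) hw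
    ((hasDerivAt_const b a).prodMk (hasDerivAt_id b)) _).congr_of_eventuallyEq
    (deriv_comp_eventuallyEq_fderiv_apply (γ := fun y x => (x, y)) hw (by fun_prop)
      fun y => (hasDerivAt_id a).prodMk (hasDerivAt_const a y))

end MixedPartials

theorem deriv_deriv_comm {𝕜 G : Type*} [RCLike 𝕜] [NormedAddCommGroup G] [NormedSpace 𝕜 G]
    {w : 𝕜 → 𝕜 → G} {a b : 𝕜}
    (hw : ContDiffAt 𝕜 2 (fun p : 𝕜 × 𝕜 => w p.1 p.2) (a, b)) :
    deriv (fun y => deriv (fun x => w x y) a) b = deriv (fun x => deriv (w x) b) a := by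
  rw [(hasDerivAt_deriv_left hw).deriv, (hasDerivAt_deriv_right hw).deriv]
  exact hw.isSymmSndFDerivAt (by simp) _ _

section SecondDerivative

variable {𝕜 : Type*} [NontriviallyNormedField 𝕜] {w : 𝕜 → 𝕜} {x : 𝕜}

theorem eventually_hasDerivAt_of_contDiffAt_two (hw : ContDiffAt 𝕜 2 w x) :
    ∀ᶠ y in 𝓝 x, HasDerivAt w (deriv w y) y := by
  filter_upwards [hw.eventually (by simp)] with y hy
  exact (hy.differentiableAt two_ne_zero).hasDerivAt

theorem hasDerivAt_deriv_of_contDiffAt_two (hw : ContDiffAt 𝕜 2 w x) :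
    HasDerivAt (deriv w) (deriv (deriv w) x) x :=
  ((hw.derivWithin (m := 1) (by norm_num)).differentiableAt one_ne_zero).hasDerivAt

theorem hasDerivAt_deriv_const_mul_id_mul (c : 𝕜) (hw : ContDiffAt 𝕜 2 w x) :
    HasDerivAt (deriv fun y => c * y * w y)
      (c * x * deriv (deriv w) x + 2 * c * deriv w x) x := by
  have hw' := eventually_hasDerivAt_of_contDiffAt_two hw
  have hc (y : 𝕜) : HasDerivAt (fun y => c * y) c y := by
    simpa using (hasDerivAt_id y).const_mul c
  have hderiv : (deriv fun y => c * y * w y) =ᶠ[𝓝 x] fun y => c * w y + c * y * deriv w y := by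
    filter_upwards [hw'] with y hy
    exact ((hc y).mul hy).deriv
  have h := ((hw'.self_of_nhds.const_mul c).add ((hc x).mul
    (hasDerivAt_deriv_of_contDiffAt_two hw))).congr_of_eventuallyEq hderiv
  exact h.congr_deriv (by ring)

theorem hasDerivAt_deriv_comp {f : 𝕜 → 𝕜} (hf : ContDiffAt 𝕜 2 f (w x))
    (hw : ContDiffAt 𝕜 2 w x) :
    HasDerivAt (deriv fun y => f (w y))
      (deriv (deriv f) (w x) * deriv w x ^ 2 + deriv f (w x) * deriv (deriv w) x) x := by
  have hw' := eventually_hasDerivAt_of_contDiffAt_two hw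
  have hderiv : (deriv fun y => f (w y)) =ᶠ[𝓝 x] fun y => deriv f (w y) * deriv w y := by
    filter_upwards [hw', hw.continuousAt.eventually (eventually_hasDerivAt_of_contDiffAt_two hf)]
      with y hy hfy
    exact (hfy.comp y hy).deriv
  have h := (((hasDerivAt_deriv_of_contDiffAt_two hf).comp x hw'.self_of_nhds).mul
    (hasDerivAt_deriv_of_contDiffAt_two hw)).congr_of_eventuallyEq hderiv
  exact h.congr_deriv (by rw [Function.comp_apply]; ring)

end SecondDerivative

/-- The heat operator `∂ₜ - Δ` on radial scalar functions `w(|x|, t)`; the dimension `n` may be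
any real number. -/
noncomputable def radialHeat (n : ℝ) (w : ℝ → ℝ → ℝ) (r t : ℝ) : ℝ :=
  deriv (w r) t - deriv (deriv fun s => w s t) r - (n - 1) / r * deriv (fun s => w s t) r

/-- The heat operator `∂ₜ - Δ` on radial vector fields `w(|x|, t) x/|x|`, as an operator on the
coefficient `w`. -/
noncomputable def radialFieldHeat (n : ℝ) (w : ℝ → ℝ → ℝ) (r t : ℝ) : ℝ :=
  radialHeat n w r t + (n - 1) / r ^ 2 * w r t

section RadialHeat

variable {n r t : ℝ} {w z : ℝ → ℝ → ℝ}

theorem radialFieldHeat_congr (h : w =ᶠ[𝓝 r] z) :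
    radialFieldHeat n w r t = radialFieldHeat n z r t := by
  have hslice : (fun s => w s t) =ᶠ[𝓝 r] fun s => z s t := h.fun_comp fun φ => φ t
  simp only [radialFieldHeat, radialHeat, h.self_of_nhds, hslice.deriv_eq, hslice.deriv.deriv_eq]

theorem radialFieldHeat_sub
    (hwt : DifferentiableAt ℝ (w r) t) (hwr : ContDiffAt ℝ 2 (fun s => w s t) r)
    (hzt : DifferentiableAt ℝ (z r) t) (hzr : ContDiffAt ℝ 2 (fun s => z s t) r) :
    radialFieldHeat n (fun s τ => w s τ - z s τ) r t =
      radialFieldHeat n w r t - radialFieldHeat n z r t := by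
  have hw := eventually_hasDerivAt_of_contDiffAt_two hwr
  have hz := eventually_hasDerivAt_of_contDiffAt_two hzr
  have hr : (deriv fun s => w s t - z s t) =ᶠ[𝓝 r]
      fun s => deriv (fun s => w s t) s - deriv (fun s => z s t) s := by
    filter_upwards [hw, hz] with s hws hzs using (hws.sub hzs).deriv
  have hrr := ((hasDerivAt_deriv_of_contDiffAt_two hwr).sub
    (hasDerivAt_deriv_of_contDiffAt_two hzr)).congr_of_eventuallyEq hr
  have ht : deriv (fun τ => w r τ - z r τ) t = deriv (w r) t - deriv (z r) t :=
    (hwt.hasDerivAt.sub hzt.hasDerivAt).deriv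
  simp only [radialFieldHeat, radialHeat, ht, hr.self_of_nhds, hrr.deriv]
  ring

theorem radialFieldHeat_const_mul_id_mul (hr : r ≠ 0) (c : ℝ)
    (hwt : DifferentiableAt ℝ (w r) t) (hwr : ContDiffAt ℝ 2 (fun s => w s t) r) :
    radialFieldHeat n (fun s τ => c * s * w s τ) r t =
      c * r * radialHeat n w r t - 2 * c * deriv (fun s => w s t) r := by
  have hc : HasDerivAt (fun s => c * s) c r := by simpa using (hasDerivAt_id r).const_mul c
  have h_r : deriv (fun s => c * s * w s t) r = c * w r t + c * r * deriv (fun s => w s t) r :=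
    (hc.mul (hwr.differentiableAt two_ne_zero).hasDerivAt).deriv
  have h_t : deriv (fun τ => c * r * w r τ) t = c * r * deriv (w r) t :=
    (hwt.hasDerivAt.const_mul _).deriv
  simp only [radialFieldHeat, radialHeat, h_t, h_r,
    (hasDerivAt_deriv_const_mul_id_mul c hwr).deriv]
  field_simp
  ring

theorem radialHeat_comp {f : ℝ → ℝ} (hf : ContDiffAt ℝ 2 f (w r t))
    (hwt : DifferentiableAt ℝ (w r) t) (hwr : ContDiffAt ℝ 2 (fun s => w s t) r) :
    radialHeat n (fun s τ => f (w s τ)) r t =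
      deriv f (w r t) * radialHeat n w r t -
        deriv (deriv f) (w r t) * deriv (fun s => w s t) r ^ 2 := by
  have hf' := (hf.differentiableAt two_ne_zero).hasDerivAt
  have h_r : deriv (fun s => f (w s t)) r = deriv f (w r t) * deriv (fun s => w s t) r :=
    (hf'.comp r (hwr.differentiableAt two_ne_zero).hasDerivAt).deriv
  have h_t : deriv (fun τ => f (w r τ)) t = deriv f (w r t) * deriv (w r) t :=
    (hf'.comp t hwt.hasDerivAt).deriv
  simp only [radialHeat, h_t, h_r,
    (hasDerivAt_deriv_comp (w := fun s => w s t) hf hwr).deriv]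
  ring

theorem radialFieldHeat_deriv (hr : r ≠ 0)
    (hw : ContDiffAt ℝ 2 (fun p : ℝ × ℝ => w p.1 p.2) (r, t))
    (hwr : ContDiffAt ℝ 3 (fun s => w s t) r) :
    radialFieldHeat n (fun s τ => deriv (fun x => w x τ) s) r t =
      deriv (fun s => radialHeat n w s t) r := by
  have hwr' : ContDiffAt ℝ 2 (deriv fun s => w s t) r := hwr.derivWithin (by norm_num)
  have hcoef : HasDerivAt (fun s => (n - 1) / s) (-((n - 1) / r ^ 2)) r := by
    simpa [div_eq_mul_inv] using (hasDerivAt_inv hr).const_mul (n - 1)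
  have hheat := (((hasDerivAt_deriv_right hw).differentiableAt.hasDerivAt.sub
    (hasDerivAt_deriv_of_contDiffAt_two hwr')).sub
    (hcoef.mul (hwr'.differentiableAt two_ne_zero).hasDerivAt)).deriv
  refine .trans ?_ hheat.symm
  simp only [radialFieldHeat, radialHeat, deriv_deriv_comm hw]
  ring

theorem contDiffAt_slice_left {m : WithTop ℕ∞}
    (hw : ContDiffAt ℝ m (fun p : ℝ × ℝ => w p.1 p.2) (r, t)) :
    ContDiffAt ℝ m (fun s => w s t) r :=
  hw.comp r (f := fun s => (s, t)) (contDiffAt_id.prodMk contDiffAt_const)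

theorem contDiffAt_slice_right {m : WithTop ℕ∞}
    (hw : ContDiffAt ℝ m (fun p : ℝ × ℝ => w p.1 p.2) (r, t)) : ContDiffAt ℝ m (w r) t :=
  hw.comp t (f := fun τ => (r, τ)) (contDiffAt_const.prodMk contDiffAt_id)

theorem radialFieldHeat_deriv_sub_const_mul_id_mul_comp {u v : ℝ → ℝ → ℝ} {f : ℝ → ℝ}
    {lam b : ℝ} (hr : r ≠ 0) (c : ℝ) (hf : ContDiffAt ℝ 2 f (v r t))
    (hu : ContDiffAt ℝ 3 (fun p : ℝ × ℝ => u p.1 p.2) (r, t))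
    (hv : ContDiffAt ℝ 2 (fun p : ℝ × ℝ => v p.1 p.2) (r, t))
    (heat_u : ∀ᶠ s in 𝓝 r, radialHeat n u s t = lam * f (v s t))
    (heat_v : radialHeat n v r t = lam * b) :
    radialFieldHeat n (fun s τ => deriv (fun x => u x τ) s - c * s * f (v s τ)) r t =
      lam * deriv f (v r t) * (deriv (fun s => v s t) r - c * r * b) +
        c * r * deriv (deriv f) (v r t) * deriv (fun s => v s t) r ^ 2 +
        2 * c * deriv f (v r t) * deriv (fun s => v s t) r := by
  have hu₂ : ContDiffAt ℝ 2 (fun p : ℝ × ℝ => u p.1 p.2) (r, t) := hu.of_le (by norm_num)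
  have hur := contDiffAt_slice_left hu
  have hvr := contDiffAt_slice_left hv
  have hvt := (contDiffAt_slice_right hv).differentiableAt two_ne_zero
  have hfr : ContDiffAt ℝ 2 (fun s => f (v s t)) r := hf.comp r hvr
  have hrfr : ContDiffAt ℝ 2 (fun s => c * s * f (v s t)) r :=
    (contDiffAt_const.mul contDiffAt_id).mul hfr
  have hft : DifferentiableAt ℝ (fun τ => f (v r τ)) t :=
    (hf.differentiableAt two_ne_zero).comp t hvt
  have hfv_r : deriv (fun s => f (v s t)) r = deriv f (v r t) * deriv (fun s => v s t) r :=
    deriv_comp r (hf.differentiableAt two_ne_zero) (hvr.differentiableAt two_ne_zero)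
  have heat_u_r : deriv (fun s => radialHeat n u s t) r =
      lam * (deriv f (v r t) * deriv (fun s => v s t) r) := by
    rw [EventuallyEq.deriv_eq heat_u, deriv_const_mul_field, hfv_r]
  rw [radialFieldHeat_sub (w := fun s τ => deriv (fun x => u x τ) s)
      (z := fun s τ => c * s * f (v s τ)) (hasDerivAt_deriv_left hu₂).differentiableAt
      (hur.derivWithin (by norm_num)) (hft.const_mul _) hrfr,
    radialFieldHeat_deriv hr hu₂ hur, heat_u_r, radialFieldHeat_const_mul_id_mul hr c hft hfr,
    radialHeat_comp hf hvt hvr, heat_v, hfv_r]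
  ring

end RadialHeat

/-- The quantity `u_r - (r/R) f(v)`, which vanishes at `r = R` under the boundary condition
`u_r = f(v)`; `J₁` and `J₂` are its instances `f = exp` at `(u, v)` and `(v, u)`. -/
noncomputable def fluxDefect (f : ℝ → ℝ) (u v : ℝ → ℝ → ℝ) (R r t : ℝ) : ℝ :=
  dr R (fun s => u s t) r - r / R * f (v r t)

section Interval

variable {R r : ℝ}

theorem dr_eq_deriv (φ : ℝ → ℝ) (hr : r ∈ Ioo 0 R) : dr R φ r = deriv φ r :=
  derivWithin_of_mem_nhds (Icc_mem_nhds hr.1 hr.2)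

theorem dr_dr_eq_deriv_deriv (φ : ℝ → ℝ) (hr : r ∈ Ioo 0 R) :
    dr R (dr R φ) r = deriv (deriv φ) r := by
  rw [dr_eq_deriv _ hr]
  apply EventuallyEq.deriv_eq
  filter_upwards [isOpen_Ioo.mem_nhds hr] with s hs using dr_eq_deriv φ hs

theorem radialHeat_eq_of_dr_eq {n t b : ℝ} {w : ℝ → ℝ → ℝ} (hr : r ∈ Ioo 0 R)
    (h : deriv (w r) t = dr R (dr R fun s => w s t) r +
      (n - 1) / r * dr R (fun s => w s t) r + b) :
    radialHeat n w r t = b := by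
  rw [radialHeat, h, dr_dr_eq_deriv_deriv _ hr, dr_eq_deriv _ hr]
  ring

theorem fluxDefect_eventuallyEq (f : ℝ → ℝ) (u v : ℝ → ℝ → ℝ) (hr : r ∈ Ioo 0 R) :
    fluxDefect f u v R =ᶠ[𝓝 r] fun s τ => deriv (fun x => u x τ) s - R⁻¹ * s * f (v s τ) := by
  filter_upwards [isOpen_Ioo.mem_nhds hr] with s hs
  funext τ
  rw [fluxDefect, dr_eq_deriv _ hs, div_eq_inv_mul]

end Interval

theorem coupled_identity_J1_J2_general {n R T lam : ℝ} {f g : ℝ → ℝ} {u v : ℝ → ℝ → ℝ}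
    (hf : ContDiff ℝ 2 f)
    (hu : ContDiffOn ℝ 3 (fun p : ℝ × ℝ => u p.1 p.2) (Ioo 0 R ×ˢ Ioo 0 T))
    (hv : ContDiffOn ℝ 2 (fun p : ℝ × ℝ => v p.1 p.2) (Ioo 0 R ×ˢ Ioo 0 T))
    (pde_u : ∀ r ∈ Ioo 0 R, ∀ t ∈ Ioo 0 T, deriv (u r) t =
      dr R (dr R fun s => u s t) r + (n - 1) / r * dr R (fun s => u s t) r + lam * f (v r t))
    (pde_v : ∀ r ∈ Ioo 0 R, ∀ t ∈ Ioo 0 T, deriv (v r) t =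
      dr R (dr R fun s => v s t) r + (n - 1) / r * dr R (fun s => v s t) r + lam * g (u r t)) :
    ∀ r ∈ Ioo 0 R, ∀ t ∈ Ioo 0 T,
      (deriv (fun τ => fluxDefect f u v R r τ) t
        - dr R (dr R fun s => fluxDefect f u v R s t) r
        - (n - 1) / r * dr R (fun s => fluxDefect f u v R s t) r
        + (n - 1) / r ^ 2 * fluxDefect f u v R r t
        - lam * deriv f (v r t) * fluxDefect g v u R r t
        = r / R * deriv (deriv f) (v r t) * dr R (fun s => v s t) r ^ 2
          + 2 / R * deriv f (v r t) * dr R (fun s => v s t) r) ∧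
      (0 ≤ deriv f (v r t) → 0 ≤ deriv (deriv f) (v r t) → 0 ≤ dr R (fun s => v s t) r →
        0 ≤ deriv (fun τ => fluxDefect f u v R r τ) t
          - dr R (dr R fun s => fluxDefect f u v R s t) r
          - (n - 1) / r * dr R (fun s => fluxDefect f u v R s t) r
          + (n - 1) / r ^ 2 * fluxDefect f u v R r t
          - lam * deriv f (v r t) * fluxDefect g v u R r t) := by
  intro r hr t ht
  have hr₀ : 0 < r := hr.1
  have hR₀ : 0 < R := hr.1.trans hr.2
  have hnhds : Ioo 0 R ×ˢ Ioo 0 T ∈ 𝓝 (r, t) :=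
    (isOpen_Ioo.prod isOpen_Ioo).mem_nhds ⟨hr, ht⟩
  have heat_u : ∀ᶠ s in 𝓝 r, radialHeat n u s t = lam * f (v s t) := by
    filter_upwards [isOpen_Ioo.mem_nhds hr] with s hs
      using radialHeat_eq_of_dr_eq hs (pde_u s hs t ht)
  have heat_J := radialFieldHeat_deriv_sub_const_mul_id_mul_comp hr₀.ne' R⁻¹ hf.contDiffAt
    (hu.contDiffAt hnhds) (hv.contDiffAt hnhds) heat_u
    (radialHeat_eq_of_dr_eq hr (pde_v r hr t ht))
  rw [← radialFieldHeat_congr (fluxDefect_eventuallyEq f u v hr), radialFieldHeat, radialHeat,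
    ← dr_dr_eq_deriv_deriv _ hr, ← dr_eq_deriv _ hr, ← dr_eq_deriv _ hr] at heat_J
  refine (and_iff_left_of_imp fun identity hf₁ hf₂ hv_r => ?_).2 ?_
  · rw [identity]
    positivity
  · rw [heat_J, fluxDefect, dr_eq_deriv _ hr]
    ring

/-- Coupled identity for `J₁, J₂` (proof of Theorem 3.1): let `λ₁ = λ₂ = λ > 0` and let
`(u,v)` be a (smooth) radial classical solution.  Then for `0 < r < R`, `0 < t < T`,
`J₁ₜ − J₁ᵣᵣ − ((n−1)/r) J₁ᵣ + ((n−1)/r²) J₁ − λ e^v J₂ = (r/R) e^v v_r² + (2/R) e^v v_r`;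
in particular, if `v_r ≥ 0` the left-hand side is nonnegative. -/
theorem coupled_identity_J1_J2 {n : ℕ} (hn : 1 ≤ n) {R T lam : ℝ}
    (hR : 0 < R) (hT : 0 < T) (hlam : 0 < lam)
    {u v : ℝ → ℝ → ℝ} (hsol : IsRadialSolution n R T lam lam u v)
    (hu : ContDiffOn ℝ (⊤ : ℕ∞) (fun p : ℝ × ℝ => u p.1 p.2) (Icc (0 : ℝ) R ×ˢ Ioo (0 : ℝ) T))
    (hv : ContDiffOn ℝ (⊤ : ℕ∞) (fun p : ℝ × ℝ => v p.1 p.2) (Icc (0 : ℝ) R ×ˢ Ioo (0 : ℝ) T)) :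
    ∀ r ∈ Ioo (0 : ℝ) R, ∀ t ∈ Ioo (0 : ℝ) T,
      (deriv (fun τ => J1fun u v R r τ) t
        - dr R (dr R (fun s => J1fun u v R s t)) r
        - ((n - 1 : ℝ) / r) * dr R (fun s => J1fun u v R s t) r
        + ((n - 1 : ℝ) / r ^ 2) * J1fun u v R r t
        - lam * Real.exp (v r t) * J2fun u v R r t
        = (r / R) * Real.exp (v r t) * (dr R (fun s => v s t) r) ^ 2
          + (2 / R) * Real.exp (v r t) * dr R (fun s => v s t) r) ∧
      (0 ≤ dr R (fun s => v s t) r →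
        0 ≤ deriv (fun τ => J1fun u v R r τ) t
          - dr R (dr R (fun s => J1fun u v R s t)) r
          - ((n - 1 : ℝ) / r) * dr R (fun s => J1fun u v R s t) r
          + ((n - 1 : ℝ) / r ^ 2) * J1fun u v R r t
          - lam * Real.exp (v r t) * J2fun u v R r t) := by
  have hsub : Ioo 0 R ×ˢ Ioo 0 T ⊆ Icc 0 R ×ˢ Ioo 0 T := prod_mono_left Ioo_subset_Icc_self
  simpa only [Real.deriv_exp, Real.exp_nonneg, true_imp_iff, fluxDefect, J1fun, J2fun] using
    coupled_identity_J1_J2_general (f := Real.exp) (g := Real.exp) Real.contDiff_exp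
      (contDiffOn_infty.1 (hu.mono hsub) 3) (contDiffOn_infty.1 (hv.mono hsub) 2)
      hsol.pde_u hsol.pde_v
end

section
/- Boundary differential inequality (proof of Theorem 3.1): Let λ₁ = λ₂ = λ > 0 and let (u,v) be a radial classical solution as in the context, with u, v, u_r, v_r extending continuously with their second r-derivatives to r = R. Suppose J₁(r,t) = u_r(r,t) − (r/R)e^{v(r,t)} ≥ 0 for all (r,t) ∈ [0,R] × (0,T) (note J₁(R,t) = 0 by the boundary condition). Then for all t ∈ (0,T): u_t(R,t) ≤ ((n−1)/R) e^{v(R,t)} + λ e^{v(R,t)} + e^{u(R,t)+v(R,t)} + (1/R) e^{v(R,t)}. -/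
/-!
Since `u_r(R,t) = e^{v(R,t)}`, the function `J₁ = u_r - (r/R) e^v` vanishes at `r = R`. If it is
nonnegative near `R`, then `R` is a local minimum at a right endpoint, so the one-sided derivative
of `J₁` there is nonpositive; by `v_r(R,t) = e^{u(R,t)}` this says
`u_rr(R,t) ≤ e^{u+v} + (1/R) e^v`. The equation for `u` persists at `r = R` by continuity, and
turns this bound on `u_rr` into the bound on `u_t`.
-/

open Set Real Filter Topology

theorem hasDerivWithinAt_nonpos_of_isLocalMinOn_Icc_right {f : ℝ → ℝ} {f' a b : ℝ} (hab : a < b)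
    (hmin : IsLocalMinOn f (Icc a b) b) (hf : HasDerivWithinAt f f' (Icc a b) b) : f' ≤ 0 := by
  have inward_mem : a - b ∈ posTangentConeAt (Icc a b) b :=
    sub_mem_posTangentConeAt_of_segment_subset
      ((convex_Icc a b).segment_subset (right_mem_Icc.2 hab.le) (left_mem_Icc.2 hab.le))
  have inward_nonneg : 0 ≤ (a - b) * f' := by
    simpa using hmin.hasFDerivWithinAt_nonneg hf.hasFDerivWithinAt inward_mem
  exact nonpos_of_mul_nonneg_right inward_nonneg (sub_neg.2 hab)

theorem contDiffOn_dr {R : ℝ} {f : ℝ → ℝ} {k m : WithTop ℕ∞} (hR : 0 < R)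
    (hf : ContDiffOn ℝ k f (Icc 0 R)) (hmk : m + 1 ≤ k) : ContDiffOn ℝ m (dr R f) (Icc 0 R) :=
  hf.derivWithin (uniqueDiffOn_Icc hR) hmk

/-- The auxiliary function `J₁(r) = f_r(r) - (r/R) e^{g(r)}` on `[0,R]`, for the profiles
`f = u(·,t)` and `g = v(·,t)` of a solution at a fixed time. -/
noncomputable def fluxExcess (R : ℝ) (f g : ℝ → ℝ) (r : ℝ) : ℝ :=
  dr R f r - (r / R) * Real.exp (g r)

theorem hasDerivWithinAt_fluxExcess {R r : ℝ} {f g : ℝ → ℝ}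
    (hf : DifferentiableWithinAt ℝ (dr R f) (Icc 0 R) r)
    (hg : DifferentiableWithinAt ℝ g (Icc 0 R) r) :
    HasDerivWithinAt (fluxExcess R f g)
      (dr R (dr R f) r - (1 / R * Real.exp (g r) + r / R * (Real.exp (g r) * dr R g r)))
      (Icc 0 R) r :=
  hf.hasDerivWithinAt.sub
    (((hasDerivWithinAt_id r _).div_const R).mul hg.hasDerivWithinAt.exp)

namespace IsRadialSolution

variable {n : ℕ} {R T lam1 lam2 t : ℝ} {u v : ℝ → ℝ → ℝ}

theorem fluxExcess_boundary (hsol : IsRadialSolution n R T lam1 lam2 u v) (hR : 0 < R)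
    (ht : t ∈ Ioo 0 T) : fluxExcess R (fun s => u s t) (fun s => v s t) R = 0 := by
  rw [fluxExcess, hsol.bc_u t ht, div_self hR.ne', one_mul, sub_self]

theorem dr_dr_u_boundary_le (hsol : IsRadialSolution n R T lam1 lam2 u v) (hR : 0 < R)
    (ht : t ∈ Ioo 0 T)
    (hJ : ∀ᶠ r in 𝓝[Icc 0 R] R, 0 ≤ fluxExcess R (fun s => u s t) (fun s => v s t) r) :
    dr R (dr R (fun s => u s t)) R
      ≤ Real.exp (u R t + v R t) + (1 / R) * Real.exp (v R t) := by
  have hR_mem : R ∈ Icc 0 R := right_mem_Icc.2 hR.le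
  have hmin : IsLocalMinOn (fluxExcess R (fun s => u s t) (fun s => v s t)) (Icc 0 R) R := by
    filter_upwards [hJ] with r hr
    rwa [hsol.fluxExcess_boundary hR ht]
  have hu : DifferentiableWithinAt ℝ (dr R (fun s => u s t)) (Icc 0 R) R :=
    (contDiffOn_dr hR (hsol.reg_r_u t ht) one_add_one_eq_two.le).differentiableOn one_ne_zero R
      hR_mem
  have hv : DifferentiableWithinAt ℝ (fun s => v s t) (Icc 0 R) R :=
    (hsol.reg_r_v t ht).differentiableOn two_ne_zero R hR_mem
  have hderiv := hasDerivWithinAt_nonpos_of_isLocalMinOn_Icc_right hR hmin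
    (hasDerivWithinAt_fluxExcess hu hv)
  rw [hsol.bc_v t ht, div_self hR.ne', one_mul] at hderiv
  rw [Real.exp_add]
  linarith

theorem pde_u_boundary (hsol : IsRadialSolution n R T lam1 lam2 u v) (hR : 0 < R)
    (ht : t ∈ Ioo 0 T) (hut : ContinuousWithinAt (fun r => deriv (u r) t) (Ioo 0 R) R) :
    deriv (u R) t = dr R (dr R (fun s => u s t)) R
      + ((n - 1 : ℝ) / R) * dr R (fun s => u s t) R + lam1 * Real.exp (v R t) := by
  have hR_mem : R ∈ Icc 0 R := right_mem_Icc.2 hR.le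
  have hdu : ContDiffOn ℝ 1 (dr R (fun s => u s t)) (Icc 0 R) :=
    contDiffOn_dr hR (hsol.reg_r_u t ht) one_add_one_eq_two.le
  have hddu : ContDiffOn ℝ 0 (dr R (dr R (fun s => u s t))) (Icc 0 R) :=
    contDiffOn_dr hR hdu (zero_add 1).le
  have hv : ContinuousWithinAt (fun r => v r t) (Icc 0 R) R :=
    (hsol.reg_r_v t ht).continuousOn R hR_mem
  have hrhs : ContinuousWithinAt (fun r => dr R (dr R (fun s => u s t)) r
      + ((n - 1 : ℝ) / r) * dr R (fun s => u s t) r + lam1 * Real.exp (v r t)) (Icc 0 R) R :=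
    ((hddu.continuousOn R hR_mem).add
      ((continuousWithinAt_const.div continuousWithinAt_id hR.ne').mul
        (hdu.continuousOn R hR_mem))).add (continuousWithinAt_const.mul hv.rexp)
  have := right_nhdsWithin_Ioo_neBot hR
  exact tendsto_nhds_unique_of_eventuallyEq hut (hrhs.mono Ioo_subset_Icc_self)
    (eventually_nhdsWithin_of_forall fun r hr => hsol.pde_u r hr t ht)

end IsRadialSolution

theorem boundary_differential_inequality_general {n : ℕ} {R T lam1 lam2 t : ℝ} {u v : ℝ → ℝ → ℝ}
    (hR : 0 < R) (hsol : IsRadialSolution n R T lam1 lam2 u v) (ht : t ∈ Ioo 0 T)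
    (hut : ContinuousWithinAt (fun r => deriv (u r) t) (Ioo 0 R) R)
    (hJ : ∀ᶠ r in 𝓝[Icc 0 R] R, 0 ≤ fluxExcess R (fun s => u s t) (fun s => v s t) r) :
    deriv (u R) t ≤ ((n - 1 : ℝ) / R) * Real.exp (v R t) + lam1 * Real.exp (v R t)
      + Real.exp (u R t + v R t) + (1 / R) * Real.exp (v R t) := by
  have hpde := hsol.pde_u_boundary hR ht hut
  rw [hsol.bc_u t ht] at hpde
  linarith [hsol.dr_dr_u_boundary_le hR ht hJ]

/-- Boundary differential inequality (proof of Theorem 3.1): let `λ₁ = λ₂ = λ > 0` and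
let `(u,v)` be a radial classical solution whose first and second `r`-derivatives and
time derivatives extend continuously to `r = R`.  If
`J₁(r,t) = u_r(r,t) − (r/R) e^{v(r,t)} ≥ 0` on `[0,R] × (0,T)`, then for every
`t ∈ (0,T)`:
`u_t(R,t) ≤ ((n−1)/R) e^{v(R,t)} + λ e^{v(R,t)} + e^{u(R,t)+v(R,t)} + (1/R) e^{v(R,t)}`. -/
theorem boundary_differential_inequality {n : ℕ} (hn : 1 ≤ n) {R T lam : ℝ}
    (hR : 0 < R) (hT : 0 < T) (hlam : 0 < lam)
    {u v : ℝ → ℝ → ℝ} (hsol : IsRadialSolution n R T lam lam u v)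
    (hext_u1 : ∀ t ∈ Ioo (0 : ℝ) T, ContinuousOn (dr R (fun s => u s t)) (Icc (0 : ℝ) R))
    (hext_u2 : ∀ t ∈ Ioo (0 : ℝ) T,
      ContinuousOn (dr R (dr R (fun s => u s t))) (Icc (0 : ℝ) R))
    (hext_v1 : ∀ t ∈ Ioo (0 : ℝ) T, ContinuousOn (dr R (fun s => v s t)) (Icc (0 : ℝ) R))
    (hext_v2 : ∀ t ∈ Ioo (0 : ℝ) T,
      ContinuousOn (dr R (dr R (fun s => v s t))) (Icc (0 : ℝ) R))
    (hext_ut : ∀ t ∈ Ioo (0 : ℝ) T, ContinuousOn (fun r => deriv (u r) t) (Icc (0 : ℝ) R))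
    (hext_vt : ∀ t ∈ Ioo (0 : ℝ) T, ContinuousOn (fun r => deriv (v r) t) (Icc (0 : ℝ) R))
    (hJ1 : ∀ r ∈ Icc (0 : ℝ) R, ∀ t ∈ Ioo (0 : ℝ) T,
      0 ≤ dr R (fun s => u s t) r - (r / R) * Real.exp (v r t)) :
    ∀ t ∈ Ioo (0 : ℝ) T,
      deriv (u R) t ≤ ((n - 1 : ℝ) / R) * Real.exp (v R t) + lam * Real.exp (v R t)
        + Real.exp (u R t + v R t) + (1 / R) * Real.exp (v R t) := by
  intro t ht
  exact boundary_differential_inequality_general hR hsol ht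
    ((hext_ut t ht R (right_mem_Icc.2 hR.le)).mono Ioo_subset_Icc_self)
    (eventually_nhdsWithin_of_forall fun r hr => hJ1 r hr t ht)
end

section
/- ODE lemma for the lower blow-up rate (proof of Theorem 3.1): Let 0 ≤ a < T, C > 0, and let f : [a,T) → ℝ be differentiable with f'(t) ≤ C e^{2f(t)} for all t ∈ [a,T), and suppose f(t) → ∞ as t → T⁻. Then e^{−2f(t)} ≤ 2C(T−t) for all t ∈ [a,T); equivalently e^{f(t)} ≥ (2C(T−t))^{−1/2}. -/
/-!
If `f' ≤ C e^{pf}` with `p > 0` (here `p = 2`), then `e^{-pf}` has derivative at least `-pC`. It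
tends to `0` at the blow-up time `T`, so at time `t` it is at most `pC(T - t)`.
-/

open Set Real Filter Topology

theorem le_of_monotoneOn_Ico_of_tendsto_nhdsLT {α β : Type*} [LinearOrder α] [DenselyOrdered α]
    [TopologicalSpace α] [OrderTopology α] [Preorder β] [TopologicalSpace β] [ClosedIciTopology β]
    {g : α → β} {a b x : α} {l : β} (hg : MonotoneOn g (Ico a b))
    (hlim : Tendsto g (𝓝[<] b) (𝓝 l)) (hx : x ∈ Ico a b) : g x ≤ l := by
  have : (𝓝[<] b).NeBot := nhdsLT_neBot_of_exists_lt ⟨x, hx.2⟩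
  refine ge_of_tendsto hlim ?_
  filter_upwards [Ico_mem_nhdsLT hx.2] with y hy
  exact hg hx ⟨hx.1.trans hy.1, hy.2⟩ hy.1

theorem mul_sub_le_sub_of_le_hasDerivAt_of_tendsto_nhdsLT {g g' : ℝ → ℝ} {a b c l x : ℝ}
    (hcont : ContinuousOn g (Ico a b)) (hg : ∀ y ∈ Ioo a b, HasDerivAt g (g' y) y)
    (hc : ∀ y ∈ Ioo a b, c ≤ g' y) (hlim : Tendsto g (𝓝[<] b) (𝓝 l)) (hx : x ∈ Ico a b) :
    c * (b - x) ≤ l - g x := by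
  have hmono : MonotoneOn (fun y ↦ g y - c * y) (Ico a b) := by
    refine monotoneOn_of_hasDerivWithinAt_nonneg (f' := fun y ↦ g' y - c) (convex_Ico a b)
      (hcont.sub (continuousOn_const.mul continuousOn_id)) ?_ ?_ <;> rw [interior_Ico]
    · exact fun y hy ↦ ((hg y hy).sub (hasDerivAt_const_mul c)).hasDerivWithinAt
    · exact fun y hy ↦ sub_nonneg.2 (hc y hy)
  have hlim_sub : Tendsto (fun y ↦ g y - c * y) (𝓝[<] b) (𝓝 (l - c * b)) :=
    hlim.sub (tendsto_nhdsWithin_of_tendsto_nhds (tendsto_id.const_mul c))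
  linarith [le_of_monotoneOn_Ico_of_tendsto_nhdsLT hmono hlim_sub hx]

theorem ode_lemma_lower_rate_general {a T C p : ℝ} (hp : 0 < p) {f f' : ℝ → ℝ}
    (hcont : ContinuousOn f (Ico a T)) (hderiv : ∀ t ∈ Ioo a T, HasDerivAt f (f' t) t)
    (hineq : ∀ t ∈ Ioo a T, f' t ≤ C * exp (p * f t)) (hblow : Tendsto f (𝓝[<] T) atTop) :
    ∀ t ∈ Ico a T, exp (-(p * f t)) ≤ p * C * (T - t) := by
  intro t ht
  have hcont_exp : ContinuousOn (fun s ↦ exp (-(p * f s))) (Ico a T) := by fun_prop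
  have hderiv_exp : ∀ s ∈ Ioo a T,
      HasDerivAt (fun s ↦ exp (-(p * f s))) (exp (-(p * f s)) * -(p * f' s)) s :=
    fun s hs ↦ ((hderiv s hs).const_mul p).fun_neg.exp
  have hbound : ∀ s ∈ Ioo a T, -(p * C) ≤ exp (-(p * f s)) * -(p * f' s) := by
    intro s hs
    calc -(p * C) = exp (-(p * f s)) * -(p * (C * exp (p * f s))) := by
          rw [exp_neg]; field_simp
      _ ≤ exp (-(p * f s)) * -(p * f' s) := by gcongr; exact hineq s hs
  have hlim : Tendsto (fun s ↦ exp (-(p * f s))) (𝓝[<] T) (𝓝 0) :=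
    tendsto_exp_neg_atTop_nhds_zero.comp (hblow.const_mul_atTop hp)
  linarith [mul_sub_le_sub_of_le_hasDerivAt_of_tendsto_nhdsLT hcont_exp hderiv_exp hbound hlim ht]

/-- ODE lemma for the lower blow-up rate (proof of Theorem 3.1): if `f` is differentiable
on `[a,T)` with `f' ≤ C e^{2f}` there and `f(t) → ∞` as `t → T⁻`, then
`e^{−2f(t)} ≤ 2C(T−t)` on `[a,T)`. -/
theorem ode_lemma_lower_rate {a T C : ℝ} (ha : 0 ≤ a) (haT : a < T) (hC : 0 < C)
    {f f' : ℝ → ℝ}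
    (hderiv : ∀ t ∈ Ico a T, HasDerivWithinAt f (f' t) (Ico a T) t)
    (hineq : ∀ t ∈ Ico a T, f' t ≤ C * Real.exp (2 * f t))
    (hblow : Tendsto f (𝓝[<] T) atTop) :
    ∀ t ∈ Ico a T, Real.exp (-(2 * f t)) ≤ 2 * C * (T - t) :=
  ode_lemma_lower_rate_general two_pos (fun t ht ↦ (hderiv t ht).continuousWithinAt)
    (fun t ht ↦ (hderiv t (Ioo_subset_Ico_self ht)).hasDerivAt (Ico_mem_nhds ht.1 ht.2))
    (fun t ht ↦ hineq t (Ioo_subset_Ico_self ht)) hblow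
end

section
/- ODE lemma for the upper blow-up rate (proof of Theorem 3.2): Let z < T be real numbers, a > 0, and let A : (z,T) → ℝ be differentiable with A'(t) ≥ a e^{A(t)} (T−t)^{−1/2} for all t ∈ (z,T), and suppose A(t) → ∞ as t → T⁻. Then e^{−A(t)} ≥ 2a√(T−t) for all t ∈ (z,T); equivalently e^{A(t)} ≤ (2a)^{−1}(T−t)^{−1/2}. -/
/-!
The inequality `A' ≥ a e^A (T - t)^{-1/2}` says that `(e^{-A})' ≤ -a (T - t)^{-1/2}`, and the right
side is the derivative of `2a√(T - t)`. So `e^{-A} - 2a√(T - t)` is nonincreasing on `(z, T)`.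
It tends to `0` at `T⁻`, since `A → ∞`; hence it is nonnegative.
-/

open Set Real Filter Topology

theorem le_of_antitoneOn_Ioo_of_tendsto {α β : Type*} [LinearOrder α] [DenselyOrdered α]
    [TopologicalSpace α] [OrderTopology α] [Preorder β] [TopologicalSpace β] [ClosedIicTopology β]
    {f : α → β} {a b x : α} {l : β} (hf : AntitoneOn f (Ioo a b))
    (hl : Tendsto f (𝓝[<] b) (𝓝 l)) (hx : x ∈ Ioo a b) : l ≤ f x := by
  have : (𝓝[<] b).NeBot := nhdsLT_neBot_of_exists_lt ⟨x, hx.2⟩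
  refine le_of_tendsto hl ?_
  filter_upwards [Ioo_mem_nhdsLT hx.2] with y hy
  exact hf hx ⟨hx.1.trans hy.1, hy.2⟩ hy.1.le

section ExpComparison

variable {A A' G G' : ℝ → ℝ}

theorem antitoneOn_exp_neg_sub {s : Set ℝ} (hs : Convex ℝ s)
    (hA : ContinuousOn A s) (hG : ContinuousOn G s)
    (hA' : ∀ t ∈ interior s, HasDerivAt A (A' t) t)
    (hG' : ∀ t ∈ interior s, HasDerivAt G (G' t) t)
    (hAG : ∀ t ∈ interior s, -G' t * exp (A t) ≤ A' t) :
    AntitoneOn (fun t => exp (-A t) - G t) s := by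
  refine antitoneOn_of_hasDerivWithinAt_nonpos hs (hA.neg.rexp.sub hG)
    (fun t ht => ((hA' t ht).neg.exp.sub (hG' t ht)).hasDerivWithinAt) fun t ht => ?_
  change exp (-A t) * -A' t - G' t ≤ 0
  have h : -G' t ≤ exp (-A t) * A' t :=
    calc -G' t = exp (-A t) * (-G' t * exp (A t)) := by
          rw [mul_left_comm, ← exp_add, neg_add_cancel, exp_zero, mul_one]
      _ ≤ exp (-A t) * A' t := mul_le_mul_of_nonneg_left (hAG t ht) (exp_pos _).le
  linarith

theorem le_exp_neg_of_neg_deriv_mul_exp_le {z T : ℝ}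
    (hA : ∀ t ∈ Ioo z T, HasDerivAt A (A' t) t)
    (hG : ∀ t ∈ Ioo z T, HasDerivAt G (G' t) t)
    (hAG : ∀ t ∈ Ioo z T, -G' t * exp (A t) ≤ A' t)
    (hA_lim : Tendsto A (𝓝[<] T) atTop) (hG_lim : Tendsto G (𝓝[<] T) (𝓝 0)) :
    ∀ t ∈ Ioo z T, G t ≤ exp (-A t) := by
  have hA_cont : ContinuousOn A (Ioo z T) := HasDerivAt.continuousOn hA
  have hG_cont : ContinuousOn G (Ioo z T) := HasDerivAt.continuousOn hG
  have h_anti : AntitoneOn (fun t => exp (-A t) - G t) (Ioo z T) := by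
    rw [← interior_Ioo] at hA hG hAG
    exact antitoneOn_exp_neg_sub (convex_Ioo z T) hA_cont hG_cont hA hG hAG
  have h_lim : Tendsto (fun t => exp (-A t) - G t) (𝓝[<] T) (𝓝 0) := by
    simpa only [sub_zero, Function.comp_apply] using
      (tendsto_exp_neg_atTop_nhds_zero.comp hA_lim).sub hG_lim
  intro t ht
  have h_nonneg := le_of_antitoneOn_Ioo_of_tendsto h_anti h_lim ht
  exact sub_nonneg.mp h_nonneg

end ExpComparison

theorem hasDerivAt_two_mul_mul_sqrt_const_sub (a : ℝ) {t T : ℝ} (ht : t < T) :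
    HasDerivAt (fun s => 2 * a * √(T - s)) (-(a / √(T - t))) t := by
  have hpos : 0 < T - t := sub_pos.mpr ht
  refine ((((hasDerivAt_id t).const_sub T).sqrt hpos.ne').const_mul (2 * a)).congr_deriv ?_
  simp only [id_eq]
  field_simp

theorem tendsto_mul_sqrt_const_sub_nhds_zero (c T : ℝ) :
    Tendsto (fun t => c * √(T - t)) (𝓝 T) (𝓝 0) :=
  Continuous.tendsto' (by fun_prop) T 0 (by rw [sub_self, sqrt_zero, mul_zero])

/-- ODE lemma for the upper blow-up rate (proof of Theorem 3.2): if `A` is differentiable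
on `(z,T)` with `A'(t) ≥ a e^{A(t)} (T−t)^{−1/2}` there and `A(t) → ∞` as `t → T⁻`, then
`e^{−A(t)} ≥ 2a√(T−t)` on `(z,T)`. -/
theorem ode_lemma_upper_rate {z T a : ℝ} (hzT : z < T) (ha : 0 < a)
    {A : ℝ → ℝ}
    (hdiff : ∀ t ∈ Ioo z T, DifferentiableAt ℝ A t)
    (hineq : ∀ t ∈ Ioo z T, a * Real.exp (A t) / Real.sqrt (T - t) ≤ deriv A t)
    (hblow : Tendsto A (𝓝[<] T) atTop) :
    ∀ t ∈ Ioo z T, 2 * a * Real.sqrt (T - t) ≤ Real.exp (-(A t)) := by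
  refine le_exp_neg_of_neg_deriv_mul_exp_le (fun t ht => (hdiff t ht).hasDerivAt)
    (fun t ht => hasDerivAt_two_mul_mul_sqrt_const_sub a ht.2) (fun t ht => ?_) hblow
    ((tendsto_mul_sqrt_const_sub_nhds_zero (2 * a) T).mono_left nhdsWithin_le_nhds)
  rw [neg_neg, div_mul_eq_mul_div]
  exact hineq t ht
end

section
/- Supersolution inequality for the comparison function (proof of Theorem 4.1): Let n ≥ 1, R > 0, T > 0, A > 0 and B > 0 with B ≥ A(4(n+4)R² + 1). Define z(x,t) = −log(A(R² − |x|²)² + B(T−t)) for (x,t) ∈ cl(B_R) × (0,T), where B_R = {x ∈ ℝⁿ : |x| < R}. Then z_t − Δz − A e^{z} ≥ 0 at every point of B_R × (0,T), where Δ is the Euclidean Laplacian in x. -/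
/-!
The function `z` depends on `x` only through `r = |x|²`, and a radial function `φ(|x|²)` has
Laplacian `2 n φ'(r) + 4 r φ''(r)`. Write `u = R² − r` and `D = A u² + B (T − t)`, so `z = −log D`.
Then `z_t = B / D`, `e^z = 1 / D` and `Δz = (4 n A u − 8 A r) / D + 16 A² u² r / D²`. As
`A u² ≤ D`, the term in `1 / D²` is at most `16 A r / D`, which leaves the condition
`A (4 n u + 8 r + 1) ≤ B`, affine in `r`.
-/

open Set Real Metric Filter Topology

/-- The Euclidean Laplacian of `f : ℝⁿ → ℝ` at `x`, computed as the sum of second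
directional derivatives along the coordinate directions. -/
noncomputable def lap {n : ℕ} (f : EuclideanSpace ℝ (Fin n) → ℝ)
    (x : EuclideanSpace ℝ (Fin n)) : ℝ :=
  ∑ i : Fin n, iteratedDeriv 2 (fun s : ℝ => f (x + s • EuclideanSpace.single i (1 : ℝ))) 0

section Derivatives

lemma iteratedDeriv_two_log (x : ℝ) : iteratedDeriv 2 log x = -(x ^ 2)⁻¹ := by
  rw [iteratedDeriv_succ, iteratedDeriv_one, deriv_log', deriv_inv]

lemma iteratedDeriv_two_neg_log_comp {g : ℝ → ℝ} {x : ℝ} (hg : ContDiffAt ℝ 2 g x)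
    (hgx : g x ≠ 0) :
    iteratedDeriv 2 (fun y => -log (g y)) x =
      (deriv g x / g x) ^ 2 - iteratedDeriv 2 g x / g x := by
  have hcomp := iteratedDeriv_comp_two (contDiffAt_log.2 hgx) hg
  rw [iteratedDeriv_two_log, deriv_log] at hcomp
  rw [iteratedDeriv_fun_neg]
  refine (congrArg Neg.neg hcomp).trans ?_
  field_simp
  ring

lemma deriv_neg_log_add_mul_sub {a B T t : ℝ} (h : a + B * (T - t) ≠ 0) :
    deriv (fun τ => -log (a + B * (T - τ))) t = B / (a + B * (T - t)) := by
  have hlin : HasDerivAt (fun τ => a + B * (T - τ)) (-B) t := by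
    simpa using (((hasDerivAt_id' t).const_sub T).const_mul B).const_add a
  simpa [neg_div] using (hlin.log h).neg.deriv

variable (A c K r : ℝ)

lemma deriv_mul_sub_sq_add :
    deriv (fun r => A * (c - r) ^ 2 + K) r = -(2 * A * (c - r)) := by
  have h := ((((hasDerivAt_id' r).const_sub c).pow 2).const_mul A).add_const K
  refine h.deriv.trans ?_
  push_cast
  ring

lemma iteratedDeriv_two_mul_sub_sq_add :
    iteratedDeriv 2 (fun r => A * (c - r) ^ 2 + K) r = 2 * A := by
  rw [iteratedDeriv_succ, iteratedDeriv_one, funext (deriv_mul_sub_sq_add A c K)]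
  simp

end Derivatives

section Laplacian

variable {n : ℕ} {x : EuclideanSpace ℝ (Fin n)}

lemma norm_add_smul_single_sq (x : EuclideanSpace ℝ (Fin n)) (i : Fin n) (s : ℝ) :
    ‖x + s • EuclideanSpace.single i (1 : ℝ)‖ ^ 2 = ‖x‖ ^ 2 + 2 * x i * s + s ^ 2 := by
  rw [norm_add_sq_real, inner_smul_right, norm_smul, EuclideanSpace.inner_single_right, mul_pow,
    PiLp.norm_single, Real.norm_eq_abs, sq_abs, conj_trivial, norm_one]
  ring

lemma iteratedDeriv_two_comp_quadratic {φ : ℝ → ℝ} {a : ℝ} (hφ : ContDiffAt ℝ 2 φ a) (b : ℝ) :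
    iteratedDeriv 2 (fun s => φ (a + 2 * b * s + s ^ 2)) 0 =
      4 * b ^ 2 * iteratedDeriv 2 φ a + 2 * deriv φ a := by
  have hderiv (s : ℝ) : HasDerivAt (fun s => a + 2 * b * s + s ^ 2) (2 * b + 2 * s) s := by
    simpa using (((hasDerivAt_id' s).const_mul (2 * b)).const_add a).fun_add (hasDerivAt_pow 2 s)
  have hderiv_two : iteratedDeriv 2 (fun s => a + 2 * b * s + s ^ 2) 0 = 2 := by
    rw [iteratedDeriv_succ, iteratedDeriv_one, funext fun s => (hderiv s).deriv]
    simp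
  have hcomp := iteratedDeriv_comp_two (f := fun s => a + 2 * b * s + s ^ 2) (x := 0)
    (by simpa using hφ) (by fun_prop)
  rw [(hderiv 0).deriv, hderiv_two] at hcomp
  refine hcomp.trans ?_
  ring_nf

theorem lap_comp_norm_sq {φ : ℝ → ℝ} (hφ : ContDiffAt ℝ 2 φ (‖x‖ ^ 2)) :
    lap (fun y => φ (‖y‖ ^ 2)) x =
      2 * n * deriv φ (‖x‖ ^ 2) + 4 * ‖x‖ ^ 2 * iteratedDeriv 2 φ (‖x‖ ^ 2) := by
  simp only [lap, norm_add_smul_single_sq, iteratedDeriv_two_comp_quadratic hφ]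
  rw [Finset.sum_add_distrib, ← Finset.sum_mul, ← Finset.mul_sum,
    ← EuclideanSpace.real_norm_sq_eq, Finset.sum_const, Finset.card_fin, nsmul_eq_mul]
  ring

lemma lap_neg_log_quartic {A c K : ℝ} (hD : A * (c - ‖x‖ ^ 2) ^ 2 + K ≠ 0) :
    lap (fun y => -log (A * (c - ‖y‖ ^ 2) ^ 2 + K)) x =
      (4 * n * A * (c - ‖x‖ ^ 2) - 8 * A * ‖x‖ ^ 2) / (A * (c - ‖x‖ ^ 2) ^ 2 + K) +
        16 * A ^ 2 * (c - ‖x‖ ^ 2) ^ 2 * ‖x‖ ^ 2 / (A * (c - ‖x‖ ^ 2) ^ 2 + K) ^ 2 := by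
  have hg : ContDiffAt ℝ 2 (fun r => A * (c - r) ^ 2 + K) (‖x‖ ^ 2) := by fun_prop
  rw [lap_comp_norm_sq (φ := fun r => -log (A * (c - r) ^ 2 + K)) (hg.log hD).neg,
    iteratedDeriv_two_neg_log_comp hg hD, deriv.fun_neg,
    deriv.log (hg.differentiableAt two_ne_zero) hD, deriv_mul_sub_sq_add,
    iteratedDeriv_two_mul_sub_sq_add, div_pow]
  ring

lemma lap_neg_log_quartic_le {A c K : ℝ} (hA : 0 ≤ A) (hK : 0 ≤ K)
    (hD : 0 < A * (c - ‖x‖ ^ 2) ^ 2 + K) :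
    lap (fun y => -log (A * (c - ‖y‖ ^ 2) ^ 2 + K)) x ≤
      A * (4 * n * (c - ‖x‖ ^ 2) + 8 * ‖x‖ ^ 2) / (A * (c - ‖x‖ ^ 2) ^ 2 + K) := by
  rw [lap_neg_log_quartic hD.ne']
  have huD : A * (c - ‖x‖ ^ 2) ^ 2 ≤ A * (c - ‖x‖ ^ 2) ^ 2 + K := le_add_of_nonneg_right hK
  generalize c - ‖x‖ ^ 2 = u at *
  generalize A * u ^ 2 + K = D at *
  have hquad : 16 * A ^ 2 * u ^ 2 * ‖x‖ ^ 2 / D ^ 2 ≤ 16 * A * ‖x‖ ^ 2 / D :=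
    calc 16 * A ^ 2 * u ^ 2 * ‖x‖ ^ 2 / D ^ 2
      _ = 16 * A * ‖x‖ ^ 2 * (A * u ^ 2) / D ^ 2 := by ring
      _ ≤ 16 * A * ‖x‖ ^ 2 * D / D ^ 2 := by gcongr
      _ = 16 * A * ‖x‖ ^ 2 / D := by field_simp
  calc (4 * n * A * u - 8 * A * ‖x‖ ^ 2) / D + 16 * A ^ 2 * u ^ 2 * ‖x‖ ^ 2 / D ^ 2
    _ ≤ (4 * n * A * u - 8 * A * ‖x‖ ^ 2) / D + 16 * A * ‖x‖ ^ 2 / D := by gcongr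
    _ = A * (4 * n * u + 8 * ‖x‖ ^ 2) / D := by ring

end Laplacian

-- The left side of `hAB` is affine in `‖x‖ ^ 2`, and for `2 ≤ n` it is largest at `x = 0`: in
-- these dimensions `A * (4 * n * c + 1) ≤ B` yields a supersolution on the whole of `ℝⁿ`.
theorem supersolution_inequality_general {n : ℕ} {A B T c t : ℝ} {x : EuclideanSpace ℝ (Fin n)}
    (hA : 0 ≤ A) (hB : 0 < B) (ht : t < T)
    (hAB : A * (4 * n * (c - ‖x‖ ^ 2) + 8 * ‖x‖ ^ 2 + 1) ≤ B) :
    0 ≤ deriv (fun τ => -log (A * (c - ‖x‖ ^ 2) ^ 2 + B * (T - τ))) t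
      - lap (fun y => -log (A * (c - ‖y‖ ^ 2) ^ 2 + B * (T - t))) x
      - A * exp (-log (A * (c - ‖x‖ ^ 2) ^ 2 + B * (T - t))) := by
  have hK : 0 < B * (T - t) := mul_pos hB (sub_pos.2 ht)
  have hD : 0 < A * (c - ‖x‖ ^ 2) ^ 2 + B * (T - t) := by positivity
  rw [deriv_neg_log_add_mul_sub hD.ne', exp_neg, exp_log hD, ← div_eq_mul_inv, sub_right_comm,
    sub_nonneg, ← sub_div]
  refine (lap_neg_log_quartic_le hA hK.le hD).trans ?_
  gcongr
  linarith

/-- Supersolution inequality for the comparison function (proof of Theorem 4.1):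
let `A > 0` and `B ≥ A(4(n+4)R² + 1)`, and set
`z(x,t) = −log(A(R² − |x|²)² + B(T−t))`.  Then `z_t − Δz − A e^z ≥ 0` on `B_R × (0,T)`. -/
theorem supersolution_inequality {n : ℕ} (hn : 1 ≤ n) {R T A B : ℝ}
    (hR : 0 < R) (hT : 0 < T) (hA : 0 < A) (hB : 0 < B)
    (hAB : A * (4 * (n + 4 : ℝ) * R ^ 2 + 1) ≤ B) :
    ∀ x ∈ ball (0 : EuclideanSpace ℝ (Fin n)) R, ∀ t ∈ Ioo (0 : ℝ) T,
      0 ≤ deriv (fun τ : ℝ =>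
            -Real.log (A * (R ^ 2 - ‖x‖ ^ 2) ^ 2 + B * (T - τ))) t
        - lap (fun y : EuclideanSpace ℝ (Fin n) =>
            -Real.log (A * (R ^ 2 - ‖y‖ ^ 2) ^ 2 + B * (T - t))) x
        - A * Real.exp (-Real.log (A * (R ^ 2 - ‖x‖ ^ 2) ^ 2 + B * (T - t))) := by
  intro x hx t ht
  have hxR : ‖x‖ ^ 2 ≤ R ^ 2 := by gcongr; exact (mem_ball_zero_iff.1 hx).le
  refine supersolution_inequality_general hA.le hB ht.2 (le_trans ?_ hAB)
  gcongr
  nlinarith [mul_nonneg (Nat.cast_nonneg (α := ℝ) n) (sq_nonneg ‖x‖)]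
end

section
/- Bound on the normal derivative of the heat kernel on the sphere (proof of Theorem 3.2): Let n ≥ 2, R > 0, S₀ > 0, and let Γ(x,t) = (4πt)^{−n/2} exp(−|x|²/(4t)). For x, y ∈ S_R = {z ∈ ℝⁿ : |z| = R} with x ≠ y and s > 0, the outward normal derivative in y satisfies ∂Γ/∂η_y(x−y,s) := ∇_xΓ(x−y,s)·(−y/R) evaluated appropriately, with |∂Γ/∂η_y(x−y,s)| = (|x−y|²/(4Rs)) Γ(x−y,s). Moreover, for every σ ∈ (0,1) and every μ ∈ (1 − σ/2, 1) there exists C* > 0 such that for all x, y ∈ S_R with x ≠ y and all s ∈ (0, S₀]: |∂Γ/∂η_y(x−y,s)| ≤ C* s^{−μ} |x−y|^{−(n+1−2μ−σ)}. -/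
/-!
On the sphere `⟪x - y, y⟫ = -|x - y|² / 2`, so pairing the gradient
`∇Γ(z, s) = -(z / (2 s)) Γ(z, s)` at `z = x - y` with `-y / R` gives
`∂Γ/∂η_y(x - y, s) = -(|x - y|² / (4 R s)) Γ(x - y, s)`.

For the bound, the inequality `exp (-u) ≤ (a / u) ^ a` with `u = |z|² / (4 s)` trades Gaussian decay
for `Γ(z, s) ≤ C s ^ (a - n / 2) |z| ^ (-2 a)`. The choice `a = n / 2 + 1 - μ` gives
`|∂Γ/∂η_y(x - y, s)| ≤ C s ^ (-μ) |x - y| ^ (2 μ - n)`, and since `|x - y| ≤ 2 R` the last exponent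
may be lowered by `1 - σ`.
-/

open Set Real Metric Filter Topology MeasureTheory

/-- The fundamental solution of the heat equation in `ℝⁿ`:
`Γ(x,t) = (4πt)^{−n/2} exp(−|x|²/(4t))`. -/
noncomputable def heatKernel (n : ℕ) (x : EuclideanSpace ℝ (Fin n)) (t : ℝ) : ℝ :=
  (4 * π * t) ^ (-(n : ℝ) / 2) * Real.exp (-‖x‖ ^ 2 / (4 * t))

/-- The outward normal derivative in `y` of the heat kernel on the sphere of radius `R`:
the directional derivative of `z ↦ Γ(x−z, s)` at `z = y` in the direction `η_y = y/R`. -/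
noncomputable def heatKernelNormalDeriv (n : ℕ) (R : ℝ)
    (x y : EuclideanSpace ℝ (Fin n)) (s : ℝ) : ℝ :=
  deriv (fun τ : ℝ => heatKernel n (x - (y + τ • (R⁻¹ • y))) s) 0

theorem real_inner_sub_left_self_of_norm_eq {E : Type*} [NormedAddCommGroup E]
    [InnerProductSpace ℝ E] {x y : E} (h : ‖x‖ = ‖y‖) : inner ℝ (x - y) y = -‖x - y‖ ^ 2 / 2 := by
  rw [norm_sub_sq_real, inner_sub_left, real_inner_self_eq_norm_sq, h]
  ring

theorem exp_neg_le_div_rpow {a u : ℝ} (ha : 0 ≤ a) (hu : 0 < u) : exp (-u) ≤ (a / u) ^ a := by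
  obtain rfl | ha := ha.eq_or_lt
  · simpa only [rpow_zero, exp_le_one_iff, neg_nonpos] using hu.le
  have hbase : exp (-(u / a)) ≤ a / u := by
    rw [exp_neg, ← inv_div u a]
    exact inv_anti₀ (by positivity) (by linarith [add_one_le_exp (u / a)])
  calc exp (-u) = exp (-(u / a)) ^ a := by rw [← exp_mul, neg_mul, div_mul_cancel₀ _ ha.ne']
    _ ≤ (a / u) ^ a := rpow_le_rpow (exp_pos _).le hbase ha.le

theorem rpow_le_rpow_sub_mul_rpow {d D p q : ℝ} (hd : 0 < d) (hdD : d ≤ D) (hqp : q ≤ p) :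
    d ^ p ≤ D ^ (p - q) * d ^ q :=
  calc d ^ p = d ^ (p - q) * d ^ q := by rw [← rpow_add hd, sub_add_cancel]
    _ ≤ D ^ (p - q) * d ^ q := by gcongr

section HeatKernel

variable {n : ℕ} {R s : ℝ} {x y z : EuclideanSpace ℝ (Fin n)}

theorem heatKernel_nonneg (hs : 0 ≤ s) : 0 ≤ heatKernel n z s := by
  unfold heatKernel
  positivity

theorem heatKernel_le_rpow_mul_rpow {a : ℝ} (ha : 0 ≤ a) (hz : z ≠ 0) (hs : 0 < s) :
    heatKernel n z s
      ≤ (4 * π) ^ (-(n : ℝ) / 2) * (4 * a) ^ a * s ^ (a - n / 2) * ‖z‖ ^ (-(2 * a)) := by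
  have hd : 0 < ‖z‖ := norm_pos_iff.mpr hz
  have hgauss : exp (-‖z‖ ^ 2 / (4 * s)) ≤ (4 * a) ^ a * s ^ a * ‖z‖ ^ (-(2 * a)) :=
    calc exp (-‖z‖ ^ 2 / (4 * s)) ≤ (a / (‖z‖ ^ 2 / (4 * s))) ^ a := by
          rw [neg_div]
          exact exp_neg_le_div_rpow ha (by positivity)
      _ = (4 * a * s * ‖z‖ ^ (-2 : ℝ)) ^ a := by
          rw [rpow_neg hd.le, rpow_two]
          congr 1
          field_simp
      _ = (4 * a) ^ a * s ^ a * ‖z‖ ^ (-(2 * a)) := by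
          rw [mul_rpow (by positivity) (by positivity), mul_rpow (by positivity) hs.le,
            ← rpow_mul hd.le, neg_mul]
  calc heatKernel n z s
      ≤ (4 * π * s) ^ (-(n : ℝ) / 2) * ((4 * a) ^ a * s ^ a * ‖z‖ ^ (-(2 * a))) := by
        unfold heatKernel
        gcongr
    _ = (4 * π) ^ (-(n : ℝ) / 2) * (4 * a) ^ a * s ^ (a - n / 2) * ‖z‖ ^ (-(2 * a)) := by
        rw [mul_rpow (by positivity) hs.le, sub_eq_add_neg, rpow_add hs, ← neg_div]
        ring

theorem hasGradientAt_heatKernel :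
    HasGradientAt (fun w => heatKernel n w s) (-(heatKernel n z s / (2 * s)) • z) z := by
  have hkernel : ∀ w : EuclideanSpace ℝ (Fin n),
      heatKernel n w s = (4 * π * s) ^ (-(n : ℝ) / 2) * exp (-(4 * s)⁻¹ * ‖w‖ ^ 2) := fun w => by
    rw [heatKernel, div_eq_inv_mul (-‖w‖ ^ 2), mul_neg, neg_mul]
  have hexponent := (hasStrictFDerivAt_norm_sq z).hasFDerivAt.const_mul (-(4 * s)⁻¹)
  simp only [hasGradientAt_iff_hasFDerivAt, hkernel]
  refine (hexponent.exp.const_mul _).congr_fderiv ?_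
  ext w
  simp only [smul_apply, coe_innerSL_apply, nsmul_eq_mul, Nat.cast_ofNat, smul_eq_mul, map_smul,
    InnerProductSpace.toDual_apply_apply]
  ring

theorem heatKernelNormalDeriv_eq_inner_mul :
    heatKernelNormalDeriv n R x y s
      = inner ℝ (x - y) (R⁻¹ • y) / (2 * s) * heatKernel n (x - y) s := by
  have hpath : HasDerivAt (fun τ : ℝ => x - (y + τ • (R⁻¹ • y))) (-(R⁻¹ • y)) 0 := by
    have hline := (hasDerivAt_id (0 : ℝ)).smul_const (R⁻¹ • y)
    rw [one_smul] at hline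
    exact (hline.const_add y).const_sub x
  have hgrad := (hasGradientAt_heatKernel (s := s) (z := x - y)).hasFDerivAt
  have hcomp := hgrad.comp_hasDerivAt_of_eq (0 : ℝ) hpath (by simp only [zero_smul, add_zero])
  refine hcomp.deriv.trans ?_
  simp only [InnerProductSpace.toDual_apply_apply, inner_smul_left, map_neg, RCLike.conj_to_real]
  ring

theorem heatKernelNormalDeriv_eq_of_mem_sphere (hx : x ∈ sphere 0 R) (hy : y ∈ sphere 0 R) :
    heatKernelNormalDeriv n R x y s
      = -(‖x - y‖ ^ 2 / (4 * R * s) * heatKernel n (x - y) s) := by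
  rw [mem_sphere_zero_iff_norm] at hx hy
  rw [heatKernelNormalDeriv_eq_inner_mul, inner_smul_right,
    real_inner_sub_left_self_of_norm_eq (hx.trans hy.symm)]
  ring

theorem abs_heatKernelNormalDeriv_of_mem_sphere (hR : 0 ≤ R) (hx : x ∈ sphere 0 R)
    (hy : y ∈ sphere 0 R) (hs : 0 ≤ s) :
    |heatKernelNormalDeriv n R x y s| = ‖x - y‖ ^ 2 / (4 * R * s) * heatKernel n (x - y) s := by
  rw [heatKernelNormalDeriv_eq_of_mem_sphere hx hy, abs_neg, abs_of_nonneg]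
  exact mul_nonneg (by positivity) (heatKernel_nonneg hs)

theorem abs_heatKernelNormalDeriv_le_of_mem_sphere {μ : ℝ} (hμ : μ ≤ n / 2 + 1) (hR : 0 ≤ R)
    (hx : x ∈ sphere 0 R) (hy : y ∈ sphere 0 R) (hxy : x ≠ y) (hs : 0 < s) :
    |heatKernelNormalDeriv n R x y s|
      ≤ (4 * R)⁻¹ * (4 * π) ^ (-(n : ℝ) / 2) * (4 * (n / 2 + 1 - μ)) ^ (n / 2 + 1 - μ)
        * s ^ (-μ) * ‖x - y‖ ^ (2 * μ - n) := by
  have hd : 0 < ‖x - y‖ := norm_pos_iff.mpr (sub_ne_zero.mpr hxy)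
  have hspow : s⁻¹ * s ^ (n / 2 + 1 - μ - n / 2) = s ^ (-μ) := by
    rw [← rpow_neg_one, ← rpow_add hs]
    ring_nf
  have hdpow : ‖x - y‖ ^ 2 * ‖x - y‖ ^ (-(2 * (n / 2 + 1 - μ))) = ‖x - y‖ ^ (2 * μ - n) := by
    rw [← rpow_two, ← rpow_add hd]
    ring_nf
  rw [abs_heatKernelNormalDeriv_of_mem_sphere hR hx hy hs.le]
  calc ‖x - y‖ ^ 2 / (4 * R * s) * heatKernel n (x - y) s
      ≤ ‖x - y‖ ^ 2 / (4 * R * s) * ((4 * π) ^ (-(n : ℝ) / 2)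
          * (4 * (n / 2 + 1 - μ)) ^ (n / 2 + 1 - μ) * s ^ (n / 2 + 1 - μ - n / 2)
          * ‖x - y‖ ^ (-(2 * (n / 2 + 1 - μ)))) := by
        gcongr
        exact heatKernel_le_rpow_mul_rpow (sub_nonneg.mpr hμ) (sub_ne_zero.mpr hxy) hs
    _ = (4 * R)⁻¹ * (4 * π) ^ (-(n : ℝ) / 2) * (4 * (n / 2 + 1 - μ)) ^ (n / 2 + 1 - μ)
          * s ^ (-μ) * ‖x - y‖ ^ (2 * μ - n) := by
        rw [← hspow, ← hdpow, div_eq_mul_inv, mul_inv]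
        ring

theorem exists_abs_heatKernelNormalDeriv_le_of_mem_sphere {σ μ : ℝ} (hσ : σ ≤ 1)
    (hμ : μ ≤ n / 2 + 1) (hR : 0 < R) :
    ∃ C : ℝ, 0 < C ∧ ∀ x ∈ sphere (0 : EuclideanSpace ℝ (Fin n)) R,
      ∀ y ∈ sphere (0 : EuclideanSpace ℝ (Fin n)) R, x ≠ y → ∀ s : ℝ, 0 < s →
        |heatKernelNormalDeriv n R x y s|
          ≤ C * s ^ (-μ) * ‖x - y‖ ^ (-((n : ℝ) + 1 - 2 * μ - σ)) := by
  set A : ℝ := (4 * R)⁻¹ * (4 * π) ^ (-(n : ℝ) / 2) * (4 * (n / 2 + 1 - μ)) ^ (n / 2 + 1 - μ)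
  have hA : 0 < A := by
    obtain h | h := (sub_nonneg.mpr hμ).eq_or_lt
    · simp only [A, ← h, rpow_zero]
      positivity
    · positivity
  refine ⟨A * (2 * R) ^ (1 - σ), by positivity, fun x hx y hy hxy s hs => ?_⟩
  have hd : 0 < ‖x - y‖ := norm_pos_iff.mpr (sub_ne_zero.mpr hxy)
  have hd_le : ‖x - y‖ ≤ 2 * R := by
    rw [two_mul]
    exact norm_sub_le_of_le (mem_sphere_zero_iff_norm.mp hx).le (mem_sphere_zero_iff_norm.mp hy).le
  have hexp : 2 * μ - n - -((n : ℝ) + 1 - 2 * μ - σ) = 1 - σ := by ring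
  calc |heatKernelNormalDeriv n R x y s|
      ≤ A * s ^ (-μ) * ‖x - y‖ ^ (2 * μ - n) :=
        abs_heatKernelNormalDeriv_le_of_mem_sphere hμ hR.le hx hy hxy hs
    _ ≤ A * s ^ (-μ) * ((2 * R) ^ (1 - σ) * ‖x - y‖ ^ (-((n : ℝ) + 1 - 2 * μ - σ))) := by
        rw [← hexp]
        gcongr
        exact rpow_le_rpow_sub_mul_rpow hd hd_le (by linarith)
    _ = A * (2 * R) ^ (1 - σ) * s ^ (-μ) * ‖x - y‖ ^ (-((n : ℝ) + 1 - 2 * μ - σ)) := by ring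

end HeatKernel

theorem heat_kernel_normal_derivative_bound_general {n : ℕ} {R : ℝ} (hR : 0 < R) :
    (∀ x ∈ sphere (0 : EuclideanSpace ℝ (Fin n)) R,
     ∀ y ∈ sphere (0 : EuclideanSpace ℝ (Fin n)) R, ∀ s : ℝ, 0 < s →
       |heatKernelNormalDeriv n R x y s|
         = ‖x - y‖ ^ 2 / (4 * R * s) * heatKernel n (x - y) s) ∧
    (∀ σ ≤ (1 : ℝ), ∀ μ ≤ (n : ℝ) / 2 + 1,
      ∃ C : ℝ, 0 < C ∧
        ∀ x ∈ sphere (0 : EuclideanSpace ℝ (Fin n)) R,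
        ∀ y ∈ sphere (0 : EuclideanSpace ℝ (Fin n)) R, x ≠ y → ∀ s : ℝ, 0 < s →
          |heatKernelNormalDeriv n R x y s|
            ≤ C * s ^ (-μ) * ‖x - y‖ ^ (-((n : ℝ) + 1 - 2 * μ - σ))) :=
  ⟨fun _ hx _ hy _ hs => abs_heatKernelNormalDeriv_of_mem_sphere hR.le hx hy hs.le,
    fun _ hσ _ hμ => exists_abs_heatKernelNormalDeriv_le_of_mem_sphere hσ hμ hR⟩

/-- Bound on the normal derivative of the heat kernel on the sphere (proof of Theorem
3.2): for `x, y ∈ S_R`, `x ≠ y`, `s > 0`, one has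
`|∂Γ/∂η_y(x−y,s)| = (|x−y|²/(4Rs)) Γ(x−y,s)`; moreover, for every `σ ∈ (0,1)` and
`μ ∈ (1−σ/2, 1)` there is `C* > 0` with
`|∂Γ/∂η_y(x−y,s)| ≤ C* s^{−μ} |x−y|^{−(n+1−2μ−σ)}` for all such `x, y` and `s ∈ (0,S₀]`. -/
theorem heat_kernel_normal_derivative_bound {n : ℕ} (hn : 2 ≤ n) {R S₀ : ℝ}
    (hR : 0 < R) (hS₀ : 0 < S₀) :
    (∀ x ∈ sphere (0 : EuclideanSpace ℝ (Fin n)) R,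
     ∀ y ∈ sphere (0 : EuclideanSpace ℝ (Fin n)) R, x ≠ y → ∀ s : ℝ, 0 < s →
       |heatKernelNormalDeriv n R x y s|
         = ‖x - y‖ ^ 2 / (4 * R * s) * heatKernel n (x - y) s) ∧
    (∀ sigma ∈ Ioo (0 : ℝ) 1, ∀ mu ∈ Ioo (1 - sigma / 2) 1,
      ∃ Cstar : ℝ, 0 < Cstar ∧
        ∀ x ∈ sphere (0 : EuclideanSpace ℝ (Fin n)) R,
        ∀ y ∈ sphere (0 : EuclideanSpace ℝ (Fin n)) R, x ≠ y → ∀ s ∈ Ioc (0 : ℝ) S₀,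
          |heatKernelNormalDeriv n R x y s|
            ≤ Cstar * s ^ (-mu) * ‖x - y‖ ^ (-((n : ℝ) + 1 - 2 * mu - sigma))) := by
  obtain ⟨hformula, hbound⟩ := heat_kernel_normal_derivative_bound_general (n := n) hR
  refine ⟨fun x hx y hy _ => hformula x hx y hy, fun σ hσ μ hμ => ?_⟩
  obtain ⟨C, hC, hle⟩ := hbound σ hσ.2.le μ (hμ.2.le.trans (le_add_of_nonneg_left (by positivity)))
  exact ⟨C, hC, fun x hx y hy hxy s hs => hle x hx y hy hxy s hs.1⟩
end
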